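/- arXiv:1607.04848 — 4 statements merged into one kernel-verified Lean document; each statement's English description precedes it below -/
import Mathlib

section
/- Let F be the distribution function of a probability measure on ℝ with quantile function Q. Then there exist sequences a_n > 0 and b_n ∈ ℝ such that F(a_n x + b_n)^n → exp(−e^{−x}) as n → ∞ for every x ∈ ℝ (i.e., F is in the domain of attraction of the Gumbel law) if and only if de Haan's criterion holds: for every choice of x, y, z, w > 0 with y ≠ w, (Q(1−sx) − Q(1−sz))/(Q(1−sy) − Q(1−sw)) → (log x − log z)/(log y − log w) as s ↓ 0. -/
open MeasureTheory Filter Set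

noncomputable section

/-- The distribution function of a measure on `ℝ`. -/
def distFun (μ : Measure ℝ) : ℝ → ℝ := fun x => (μ (Set.Iic x)).toReal

/-- The quantile (left-continuous inverse) function of a distribution function. -/
def quantileFun (F : ℝ → ℝ) : ℝ → ℝ := fun s => sInf {x : ℝ | s ≤ F x}

/-- de Haan's criterion for the Gumbel domain of attraction, in terms of the
quantile function `Q`. -/
def DeHaanGumbel (Q : ℝ → ℝ) : Prop :=
  ∀ x y z w : ℝ, 0 < x → 0 < y → 0 < z → 0 < w → y ≠ w →
    Tendsto (fun s : ℝ => (Q (1 - s * x) - Q (1 - s * z)) / (Q (1 - s * y) - Q (1 - s * w)))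
      (nhdsWithin 0 (Set.Ioi 0))
      (nhds ((Real.log x - Real.log z) / (Real.log y - Real.log w)))

/-- The Lebesgue–Stieltjes measure `dQ` on `(0,1)` associated with the quantile function of
`F`: it coincides with the pushforward of Lebesgue measure under `F`
(for an interval `(a,b] ⊆ (0,1)` it has mass `Q(b+) - Q(a+)`). -/
def dQ (μ : Measure ℝ) : Measure ℝ := Measure.map (distFun μ) volume

/-- `c(s,β) = s^{-β} ∫_{(1-s,1)} (1-u)^β dQ(u)`. -/
def cBeta (μ : Measure ℝ) (s β : ℝ) : ℝ :=
  s ^ (-β) * ∫ u in Set.Ioo (1 - s) 1, (1 - u) ^ β ∂(dQ μ)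

/-- `c(s) = c(s,1) = s⁻¹ ∫_{(1-s,1)} (1-u) dQ(u)`. -/
def cFun (μ : Measure ℝ) (s : ℝ) : ℝ := cBeta μ s 1

/-- `σ²(s) = ∫_{(1-s,1)} ∫_{(1-s,1)} (min(u,v) - uv) dQ(u) dQ(v)`. -/
def sigmaSq (μ : Measure ℝ) (s : ℝ) : ℝ :=
  ∫ v in Set.Ioo (1 - s) 1, (∫ u in Set.Ioo (1 - s) 1, (min u v - u * v) ∂(dQ μ)) ∂(dQ μ)

/-- A function is slowly varying at zero if `L(λ s)/L(s) → 1` as `s ↓ 0` for every `λ > 0`. -/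
def SlowlyVaryingAtZero (L : ℝ → ℝ) : Prop :=
  ∀ lam : ℝ, 0 < lam →
    Tendsto (fun s : ℝ => L (lam * s) / L s) (nhdsWithin 0 (Set.Ioi 0)) (nhds 1)

/-- Condition (K) on the sequence of integers `k n`. -/
def CondK (k : ℕ → ℕ) : Prop :=
  (∀ n : ℕ, 1 ≤ k n ∧ k n ≤ n) ∧ Tendsto k atTop atTop ∧
    Tendsto (fun n : ℕ => (k n : ℝ) / (n : ℝ)) atTop (nhds 0)

lemma aux_Qle (F : ℝ → ℝ) (hm : Monotone F) (h0 : Tendsto F atBot (nhds 0))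
    {p x : ℝ} (hp : 0 < p) (h : p ≤ F x) : quantileFun F p ≤ x := by
  unfold quantileFun
  refine csInf_le ?_ h
  obtain ⟨m, hm'⟩ := (h0.eventually (gt_mem_nhds hp)).exists
  refine ⟨m, fun y hy => ?_⟩
  by_contra hlt
  push Not at hlt
  have h1 := hm hlt.le
  have h2 : p ≤ F y := hy
  linarith

lemma aux_leQ (F : ℝ → ℝ) (hm : Monotone F) (h1 : Tendsto F atTop (nhds 1))
    {p x : ℝ} (hp : p < 1) (h : F x < p) : x ≤ quantileFun F p := by
  unfold quantileFun
  obtain ⟨m, hm'⟩ := (h1.eventually (lt_mem_nhds hp)).exists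
  refine le_csInf ⟨m, hm'.le⟩ (fun y hy => ?_)
  by_contra hlt
  push Not at hlt
  have h1 := hm hlt.le
  have h2 : p ≤ F y := hy
  linarith

lemma aux_pow (x : ℝ) : Tendsto (fun s : ℝ => (1 - s * x) ^ (⌊s⁻¹⌋₊))
    (nhdsWithin 0 (Set.Ioi 0)) (nhds (Real.exp (-x))) := by
  have hT : Tendsto (fun T : ℝ => (1 + (-x) / T) ^ (⌊T⌋₊)) atTop (nhds (Real.exp (-x))) := by
    have h1 := Real.tendsto_one_add_div_rpow_exp (-x)
    have h2 := h1.rpow (tendsto_nat_floor_div_atTop (R := ℝ)) (Or.inl (Real.exp_pos _).ne')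
    rw [Real.rpow_one] at h2
    refine h2.congr' ?_
    filter_upwards [eventually_gt_atTop 0, eventually_gt_atTop x] with T hT hx
    have hb : 0 ≤ 1 + (-x) / T := by
      have : x / T < 1 := (div_lt_one hT).2 hx
      rw [neg_div]; linarith
    rw [← Real.rpow_mul hb, mul_div_cancel₀ _ hT.ne', Real.rpow_natCast]
  refine (hT.comp tendsto_inv_nhdsGT_zero).congr (fun s => ?_)
  simp only [Function.comp]
  congr 1
  rw [div_inv_eq_mul]; ring

lemma aux_forward (F : ℝ → ℝ) (hm : Monotone F) (hpos : ∀ x, 0 ≤ F x)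
    (h0 : Tendsto F atBot (nhds 0)) (h1 : Tendsto F atTop (nhds 1))
    (a b : ℕ → ℝ) (ha : ∀ n, 0 < a n)
    (hG : ∀ x : ℝ, Tendsto (fun n : ℕ => (F (a n * x + b n)) ^ n) atTop
          (nhds (Real.exp (-Real.exp (-x))))) (x : ℝ) (hx : 0 < x) :
    Tendsto (fun s : ℝ => (quantileFun F (1 - s * x) - b ⌊s⁻¹⌋₊) / a ⌊s⁻¹⌋₊)
      (nhdsWithin 0 (Set.Ioi 0)) (nhds (-Real.log x)) := by
  have hn : Tendsto (fun s : ℝ => ⌊s⁻¹⌋₊) (nhdsWithin 0 (Set.Ioi 0)) atTop :=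
    tendsto_nat_floor_atTop.comp tendsto_inv_nhdsGT_zero
  have hsx : ∀ᶠ s : ℝ in nhdsWithin 0 (Set.Ioi 0), 0 < 1 - s * x := by
    have : Tendsto (fun s : ℝ => 1 - s * x) (nhdsWithin 0 (Set.Ioi 0)) (nhds (1 - 0 * x)) :=
      ((by fun_prop : Continuous (fun s : ℝ => 1 - s * x)).tendsto 0).mono_left nhdsWithin_le_nhds
    exact this.eventually (lt_mem_nhds (by simp))
  have hs : ∀ᶠ s : ℝ in nhdsWithin 0 (Set.Ioi 0), 0 < s := self_mem_nhdsWithin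
  have key : ∀ t, Real.exp (-Real.exp (-t)) < Real.exp (-x) ↔ t < -Real.log x := by
    intro t
    rw [Real.exp_lt_exp, neg_lt_neg_iff, ← Real.log_lt_iff_lt_exp hx, lt_neg]
  have key' : ∀ t, Real.exp (-x) < Real.exp (-Real.exp (-t)) ↔ -Real.log x < t := by
    intro t
    rw [Real.exp_lt_exp, neg_lt_neg_iff, ← Real.lt_log_iff_exp_lt hx, neg_lt]
  rw [tendsto_order]
  constructor
  · intro c hc
    obtain ⟨t, hct, ht⟩ := exists_between hc
    filter_upwards [((hG t).comp hn).eventually_lt (aux_pow x) ((key t).2 ht), hsx, hs]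
      with s h2 h3 h4
    have h5 := lt_of_pow_lt_pow_left₀ _ h3.le h2
    have h6 := aux_leQ F hm h1 (by nlinarith [mul_pos h4 hx]) h5
    rw [lt_div_iff₀ (ha _)]
    nlinarith [ha ⌊s⁻¹⌋₊]
  · intro c hc
    obtain ⟨t, ht, hct⟩ := exists_between hc
    filter_upwards [(aux_pow x).eventually_lt ((hG t).comp hn) ((key' t).2 ht), hsx, hs]
      with s h2 h3 h4
    have h5 := lt_of_pow_lt_pow_left₀ _ (hpos _) h2
    have h6 := aux_Qle F hm h0 h3 h5.le
    rw [div_lt_iff₀ (ha _)]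
    nlinarith [ha ⌊s⁻¹⌋₊]

lemma aux_backward (F : ℝ → ℝ) (hm : Monotone F) (hpos : ∀ x, 0 ≤ F x)
    (h0 : Tendsto F atBot (nhds 0)) (h1 : Tendsto F atTop (nhds 1))
    (a b : ℕ → ℝ) (ha : ∀ n, 0 < a n)
    (hk : ∀ t : ℝ, Tendsto (fun n : ℕ => (quantileFun F (1 - (n : ℝ)⁻¹ * Real.exp (-t)) - b n) / a n)
      atTop (nhds t)) (x : ℝ) :
    Tendsto (fun n : ℕ => (F (a n * x + b n)) ^ n) atTop (nhds (Real.exp (-Real.exp (-x)))) := by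
  have hpw : ∀ t : ℝ, Tendsto (fun n : ℕ => (1 - (n : ℝ)⁻¹ * Real.exp (-t)) ^ n) atTop
      (nhds (Real.exp (-Real.exp (-t)))) := by
    intro t
    refine (Real.tendsto_one_add_div_pow_exp (-Real.exp (-t))).congr (fun n => ?_)
    congr 1
    ring
  have hsx : ∀ t : ℝ, ∀ᶠ n : ℕ in atTop, 0 < 1 - (n : ℝ)⁻¹ * Real.exp (-t) := by
    intro t
    have : Tendsto (fun n : ℕ => 1 - (n : ℝ)⁻¹ * Real.exp (-t)) atTop
        (nhds (1 - 0 * Real.exp (-t))) :=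
      tendsto_const_nhds.sub ((tendsto_inv_atTop_nhds_zero_nat (𝕜 := ℝ)).mul_const _)
    exact this.eventually (lt_mem_nhds (by simp))
  have hc : Continuous (fun t : ℝ => Real.exp (-Real.exp (-t))) := by fun_prop
  rw [tendsto_order]
  constructor
  · intro c hcx
    have e1 : ∀ᶠ t in nhdsWithin x (Set.Iio x), c < Real.exp (-Real.exp (-t)) :=
      ((hc.tendsto x).eventually (lt_mem_nhds hcx)).filter_mono nhdsWithin_le_nhds
    obtain ⟨t, hct, htx⟩ := (e1.and self_mem_nhdsWithin).exists
    filter_upwards [(hk t).eventually (gt_mem_nhds htx), hsx t,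
      (hpw t).eventually (lt_mem_nhds hct), eventually_gt_atTop 0] with n h2 h3 h4 h5
    have hn : (0 : ℝ) < n := by exact_mod_cast h5
    rw [div_lt_iff₀ (ha _)] at h2
    have h6 : 1 - (n : ℝ)⁻¹ * Real.exp (-t) ≤ F (a n * x + b n) := by
      by_contra hlt
      push Not at hlt
      have hp : (0 : ℝ) < (n : ℝ)⁻¹ * Real.exp (-t) := by positivity
      have := aux_leQ F hm h1 (by linarith) hlt
      linarith
    exact h4.trans_le (pow_le_pow_left₀ h3.le h6 n)
  · intro c hcx
    have e1 : ∀ᶠ t in nhdsWithin x (Set.Ioi x), Real.exp (-Real.exp (-t)) < c :=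
      ((hc.tendsto x).eventually (gt_mem_nhds hcx)).filter_mono nhdsWithin_le_nhds
    obtain ⟨t, hct, htx⟩ := (e1.and self_mem_nhdsWithin).exists
    filter_upwards [(hk t).eventually (lt_mem_nhds htx), hsx t,
      (hpw t).eventually (gt_mem_nhds hct)] with n h2 h3 h4
    rw [lt_div_iff₀ (ha _)] at h2
    have h6 : F (a n * x + b n) ≤ 1 - (n : ℝ)⁻¹ * Real.exp (-t) := by
      by_contra hlt
      push Not at hlt
      have := aux_Qle F hm h0 h3 hlt.le
      linarith
    exact (pow_le_pow_left₀ (hpos _) h6 n).trans_lt h4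

lemma aux_norm (F : ℝ → ℝ) (hm : Monotone F) 
    (h0 : Tendsto F atBot (nhds 0)) (h1 : Tendsto F atTop (nhds 1))
    {p q : ℝ} (hp : 0 < p) (hpq : p ≤ q) (hq : q < 1) : quantileFun F p ≤ quantileFun F q := by
  unfold quantileFun
  obtain ⟨m, hm'⟩ := (h1.eventually (lt_mem_nhds hq)).exists
  exact le_csInf ⟨m, hm'.le⟩ (fun y hy => aux_Qle F hm h0 hp (hpq.trans hy))

/-- `F` is in the domain of attraction of the Gumbel law iff
de Haan's criterion holds for its quantile function. -/
theorem gumbel_domain_iff_deHaan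
    (μ : Measure ℝ) [IsProbabilityMeasure μ] (F Q : ℝ → ℝ)
    (hF : F = distFun μ) (hQ : Q = quantileFun F) :
    (∃ a b : ℕ → ℝ, (∀ n : ℕ, 0 < a n) ∧
        ∀ x : ℝ, Tendsto (fun n : ℕ => (F (a n * x + b n)) ^ n) atTop
          (nhds (Real.exp (-Real.exp (-x))))) ↔
      DeHaanGumbel Q := by
  have hFc : F = ProbabilityTheory.cdf μ := by
    rw [hF]; funext x; rw [ProbabilityTheory.cdf_eq_real]; rfl
  have hm : Monotone F := hFc ▸ ProbabilityTheory.monotone_cdf μ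
  have hpos : ∀ x, 0 ≤ F x := hFc ▸ ProbabilityTheory.cdf_nonneg μ
  have h0 : Tendsto F atBot (nhds 0) := hFc ▸ ProbabilityTheory.tendsto_cdf_atBot μ
  have h1 : Tendsto F atTop (nhds 1) := hFc ▸ ProbabilityTheory.tendsto_cdf_atTop μ
  clear hFc hF
  subst hQ
  constructor
  · rintro ⟨a, b, ha, hG⟩ x y z w hx hy hz hw hyw
    have H := aux_forward F hm hpos h0 h1 a b ha hG
    have hne : -Real.log y - -Real.log w ≠ 0 := by
      intro h
      exact hyw (Real.log_injOn_pos hy hw (by linarith))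
    have L := ((H x hx).sub (H z hz)).div ((H y hy).sub (H w hw)) hne
    have e : (-Real.log x - -Real.log z) / (-Real.log y - -Real.log w)
        = (Real.log x - Real.log z) / (Real.log y - Real.log w) := by
      rw [← neg_div_neg_eq]; congr 1 <;> ring
    rw [e] at L
    refine L.congr (fun s => ?_)
    simp only [Pi.div_apply, Pi.sub_apply]
    rw [← sub_div, ← sub_div, div_div_div_cancel_right₀ (ha _).ne']
    congr 1 <;> ring
  · intro hD
    let b : ℕ → ℝ := fun n => quantileFun F (1 - (n : ℝ)⁻¹ * 1)
    let a' : ℕ → ℝ := fun n => quantileFun F (1 - (n : ℝ)⁻¹ * Real.exp (-1)) - b n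
    let a : ℕ → ℝ := fun n => if 0 < a' n then a' n else 1
    have ha : ∀ n, 0 < a n := by
      intro n
      simp only [a]
      split_ifs with h
      · exact h
      · exact one_pos
    have hinv : Tendsto (fun n : ℕ => (n : ℝ)⁻¹) atTop (nhdsWithin 0 (Set.Ioi 0)) :=
      tendsto_inv_atTop_nhdsGT_zero.comp tendsto_natCast_atTop_atTop
    have hk' : ∀ t : ℝ, Tendsto
        (fun n : ℕ => (quantileFun F (1 - (n : ℝ)⁻¹ * Real.exp (-t)) - b n) / a' n)
        atTop (nhds t) := by
      intro t
      have hne : Real.exp (-1) ≠ 1 := by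
        rw [Ne, Real.exp_eq_one_iff]; norm_num
      have := (hD (Real.exp (-t)) (Real.exp (-1)) 1 1 (Real.exp_pos _) (Real.exp_pos _)
        one_pos one_pos hne).comp hinv
      simpa [Function.comp_def, a', b] using this
    have haa : ∀ᶠ n in atTop, a' n = a n := by
      filter_upwards [(hk' 1).eventually (lt_mem_nhds one_pos), eventually_gt_atTop 1] with n h2 h3
      have hn : (1 : ℝ) < n := by exact_mod_cast h3
      have hi : (n : ℝ)⁻¹ < 1 := inv_lt_one_of_one_lt₀ hn
      have hi0 : 0 < (n : ℝ)⁻¹ := by positivity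
      have he : Real.exp (-1) ≤ 1 := by
        rw [Real.exp_le_one_iff]; norm_num
      have hge : 0 ≤ a' n := by
        refine sub_nonneg.2 (aux_norm F hm h0 h1 (by linarith) (by nlinarith) ?_)
        nlinarith [mul_pos hi0 (Real.exp_pos (-1))]
      have hne : a' n ≠ 0 := by
        intro h
        rw [h, div_zero] at h2
        exact lt_irrefl _ h2
      have : 0 < a' n := lt_of_le_of_ne hge hne.symm
      simp only [a, if_pos this]
    refine ⟨a, b, ha, aux_backward F hm hpos h0 h1 a b ha (fun t => (hk' t).congr' ?_)⟩
    filter_upwards [haa] with n hn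
    rw [hn]
end
end

section
/- Suppose F ∈ D(Λ), i.e. its quantile function Q satisfies de Haan's criterion. Then for each fixed β > 0 the function s ↦ c(s, β) is slowly varying at zero: for every λ > 0, c(λs, β)/c(s, β) → 1 as s ↓ 0. -/
open MeasureTheory Filter Set

noncomputable section

theorem aux_Ici (μ : Measure ℝ) [IsProbabilityMeasure μ] (t : ℝ) (h0 : 0 < t) (h1 : t < 1) :
    {x : ℝ | t ≤ distFun μ x} = Set.Ici (quantileFun (distFun μ) t) := by
  have hc : distFun μ = ProbabilityTheory.cdf μ := by
    funext x; rw [ProbabilityTheory.cdf_eq_real]; rfl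
  rw [hc]
  set F := ProbabilityTheory.cdf μ with hF
  have hbdd : BddBelow {x : ℝ | t ≤ F x} := by
    have := (ProbabilityTheory.tendsto_cdf_atBot μ).eventually (gt_mem_nhds h0)
    obtain ⟨a, ha⟩ := this.exists
    refine ⟨a, fun x hx => ?_⟩
    by_contra hlt
    have := F.mono (not_le.1 hlt).le
    have hx' : t ≤ F x := hx
    linarith
  have hne : {x : ℝ | t ≤ F x}.Nonempty := by
    have := (ProbabilityTheory.tendsto_cdf_atTop μ).eventually (lt_mem_nhds h1)
    obtain ⟨a, ha⟩ := this.exists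
    exact ⟨a, ha.le⟩
  ext x
  simp only [Set.mem_ofPred_eq, Set.mem_Ici, quantileFun]
  constructor
  · intro hx
    exact csInf_le hbdd hx
  · intro hx
    have hr : Tendsto F (nhdsWithin x (Set.Ioi x)) (nhds (F x)) :=
      (F.right_continuous x).mono_left (nhdsWithin_mono _ Set.Ioi_subset_Ici_self)
    refine ge_of_tendsto hr ?_
    filter_upwards [self_mem_nhdsWithin] with y hy
    obtain ⟨z, hz, hzy⟩ := exists_lt_of_csInf_lt hne (lt_of_le_of_lt hx hy)
    exact le_trans hz (F.mono hzy.le)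

theorem aux_mono (μ : Measure ℝ) [IsProbabilityMeasure μ] : Monotone (distFun μ) := by
  have hc : distFun μ = ProbabilityTheory.cdf μ := by
    funext x; rw [ProbabilityTheory.cdf_eq_real]; rfl
  rw [hc]
  exact (ProbabilityTheory.cdf μ).mono

/-- pieces -/
def pieceSet (μ : Measure ℝ) (q u : ℝ) : Set ℝ := {x | 1 - u ≤ distFun μ x ∧ distFun μ x < 1 - q * u}

theorem piece_meas (μ : Measure ℝ) [IsProbabilityMeasure μ] (q u : ℝ) :
    MeasurableSet (pieceSet μ q u) :=
  (measurableSet_le measurable_const (aux_mono μ).measurable).inter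
    (measurableSet_lt (aux_mono μ).measurable measurable_const)

theorem piece_vol (μ : Measure ℝ) [IsProbabilityMeasure μ] (q u : ℝ) (hq : 0 < q) (hq1 : q < 1)
    (hu : 0 < u) (hu1 : u < 1) :
    volume (pieceSet μ q u) = ENNReal.ofReal
      (quantileFun (distFun μ) (1 - q * u) - quantileFun (distFun μ) (1 - u)) := by
  have h1 := aux_Ici μ (1 - u) (by linarith) (by linarith)
  have h2 := aux_Ici μ (1 - q * u) (by nlinarith) (by nlinarith)
  have : pieceSet μ q u = Set.Ico (quantileFun (distFun μ) (1 - u))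
      (quantileFun (distFun μ) (1 - q * u)) := by
    ext x
    have a1 := Set.ext_iff.1 h1 x
    have a2 := Set.ext_iff.1 h2 x
    simp only [Set.mem_ofPred_eq, Set.mem_Ici] at a1 a2
    simp only [pieceSet, Set.mem_ofPred_eq, Set.mem_Ico]
    rw [a1, ← not_le, a2, not_le]
  rw [this, Real.volume_Ico]

/-- `J` -/
def bigJ (μ : Measure ℝ) (β s : ℝ) : ENNReal :=
  ∫⁻ x in {x | 1 - s ≤ distFun μ x ∧ distFun μ x < 1}, ENNReal.ofReal ((1 - distFun μ x) ^ β)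

/-- `I` -/
def bigI (μ : Measure ℝ) (β s : ℝ) : ENNReal :=
  ∫⁻ x in {x | 1 - s < distFun μ x ∧ distFun μ x < 1}, ENNReal.ofReal ((1 - distFun μ x) ^ β)

/-- `T` -/
def bigT (μ : Measure ℝ) (β q s : ℝ) : ENNReal :=
  ∑' k : ℕ, ENNReal.ofReal ((q ^ k) ^ β) * volume (pieceSet μ q (s * q ^ k))

theorem J_eq (μ : Measure ℝ) [IsProbabilityMeasure μ] (β q s : ℝ) (hq : 0 < q) (hq1 : q < 1)
    (hs : 0 < s) : bigJ μ β s = ∑' k : ℕ, ∫⁻ x in pieceSet μ q (s * q ^ k),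
      ENNReal.ofReal ((1 - distFun μ x) ^ β) := by
  rw [bigJ, ← lintegral_iUnion (fun k => piece_meas μ q _)]
  · congr 2
    ext x
    simp only [pieceSet, Set.mem_ofPred_eq, Set.mem_iUnion]
    constructor
    · rintro ⟨h1, h2⟩
      obtain ⟨n, hn1, hn2⟩ := exists_nat_pow_near_of_lt_one
        (x := (1 - distFun μ x) / s) (y := q) (by apply div_pos <;> linarith)
        (by rw [div_le_one hs]; linarith) hq hq1
      rw [lt_div_iff₀ hs, pow_succ] at hn1
      rw [div_le_iff₀ hs] at hn2
      exact ⟨n, by linarith, by nlinarith⟩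
    · rintro ⟨k, h1, h2⟩
      have : q ^ k ≤ 1 := pow_le_one₀ hq.le hq1.le
      have h3 : 0 < q ^ k := pow_pos hq k
      have h4 : 0 < q * (s * q ^ k) := by positivity
      exact ⟨by nlinarith, by linarith⟩
  · intro i j hij
    have key : ∀ i j : ℕ, i < j → Disjoint (pieceSet μ q (s * q ^ i)) (pieceSet μ q (s * q ^ j)) := by
      intro i j hij
      rw [Set.disjoint_left]
      rintro x ⟨_, h2⟩ ⟨h3, _⟩
      have : q ^ j ≤ q ^ (i + 1) := pow_le_pow_of_le_one hq.le hq1.le hij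
      rw [pow_succ] at this
      have h5 := mul_le_mul_of_nonneg_left this hs.le
      nlinarith
    rcases lt_or_gt_of_ne hij with h | h
    · exact key i j h
    · exact (key j i h).symm

theorem J_le (μ : Measure ℝ) [IsProbabilityMeasure μ] (β q s : ℝ) (hβ : 0 < β)
    (hq : 0 < q) (hq1 : q < 1) (hs : 0 < s) :
    bigJ μ β s ≤ ENNReal.ofReal (s ^ β) * bigT μ β q s := by
  rw [J_eq μ β q s hq hq1 hs, bigT, ← ENNReal.tsum_mul_left]
  refine ENNReal.tsum_le_tsum fun k => ?_
  have h3 : 0 < q ^ k := pow_pos hq k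
  rw [← mul_assoc, ← ENNReal.ofReal_mul (by positivity), ← Real.mul_rpow hs.le h3.le,
    ← setLIntegral_const]
  refine setLIntegral_mono' (piece_meas μ q _) fun x hx => ?_
  apply ENNReal.ofReal_le_ofReal
  have h4 : 0 < q * (s * q ^ k) := by positivity
  have := hx.1
  have := hx.2
  exact Real.rpow_le_rpow (by linarith) (by linarith) hβ.le

theorem J_ge (μ : Measure ℝ) [IsProbabilityMeasure μ] (β q s : ℝ) (hβ : 0 < β)
    (hq : 0 < q) (hq1 : q < 1) (hs : 0 < s) :
    ENNReal.ofReal ((q * s) ^ β) * bigT μ β q s ≤ bigJ μ β s := by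
  rw [J_eq μ β q s hq hq1 hs, bigT, ← ENNReal.tsum_mul_left]
  refine ENNReal.tsum_le_tsum fun k => ?_
  have h3 : 0 < q ^ k := pow_pos hq k
  rw [← mul_assoc, ← ENNReal.ofReal_mul (by positivity), ← Real.mul_rpow (by positivity) h3.le,
    ← setLIntegral_const]
  refine setLIntegral_mono' (piece_meas μ q _) fun x hx => ?_
  apply ENNReal.ofReal_le_ofReal
  have h4 : 0 < q * (s * q ^ k) := by positivity
  have := hx.1
  have := hx.2
  exact Real.rpow_le_rpow (by positivity) (by linarith) hβ.le

theorem I_le_J (μ : Measure ℝ) (β s : ℝ) : bigI μ β s ≤ bigJ μ β s :=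
  lintegral_mono_set fun _ hx => ⟨hx.1.le, hx.2⟩

theorem J_le_I (μ : Measure ℝ) (β s q : ℝ) (hq1 : q < 1) (hs : 0 < s) :
    bigJ μ β (q * s) ≤ bigI μ β s :=
  lintegral_mono_set fun x hx => ⟨by have := hx.1; nlinarith, hx.2⟩

theorem lint_eq (μ : Measure ℝ) [IsProbabilityMeasure μ] (β s : ℝ) :
    ∫⁻ u in Set.Ioo (1 - s) 1, ENNReal.ofReal ((1 - u) ^ β) ∂(dQ μ) = bigI μ β s := by
  rw [dQ, setLIntegral_map measurableSet_Ioo (by fun_prop) (aux_mono μ).measurable]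
  rfl

theorem int_eq (μ : Measure ℝ) [IsProbabilityMeasure μ] (β s : ℝ) :
    ∫ u in Set.Ioo (1 - s) 1, (1 - u) ^ β ∂(dQ μ) = (bigI μ β s).toReal := by
  rw [integral_eq_lintegral_of_nonneg_ae, lint_eq]
  · filter_upwards [ae_restrict_mem measurableSet_Ioo] with u hu
    exact Real.rpow_nonneg (by linarith [hu.2]) _
  · exact Measurable.aestronglyMeasurable (by fun_prop)

theorem fin_of (μ : Measure ℝ) [IsProbabilityMeasure μ] (β s : ℝ)
    (h : IntegrableOn (fun u : ℝ => (1 - u) ^ β) (Set.Ioo (1 - s) 1) (dQ μ)) :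
    bigI μ β s ≠ ⊤ := by
  rw [← lint_eq]
  exact h.lintegral_lt_top.ne

/-- ratio control of `V` -/
theorem V_ratio (μ : Measure ℝ) [IsProbabilityMeasure μ]
    (hD : DeHaanGumbel (quantileFun (distFun μ))) (q ε lam : ℝ) (hq : 0 < q) (hq1 : q < 1)
    (he : 0 < ε) (he1 : ε < 1) (hl : 0 < lam) :
    ∀ᶠ u in nhdsWithin (0:ℝ) (Set.Ioi 0),
      volume (pieceSet μ q u) ≠ 0 ∧
      ENNReal.ofReal (1 - ε) * volume (pieceSet μ q u) ≤ volume (pieceSet μ q (lam * u)) ∧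
      volume (pieceSet μ q (lam * u)) ≤ ENNReal.ofReal (1 + ε) * volume (pieceSet μ q u) := by
  have h := hD (q * lam) q lam 1 (by positivity) hq hl one_pos hq1.ne
  have hlog : Real.log q ≠ 0 := (Real.log_neg hq hq1).ne
  rw [Real.log_mul hq.ne' hl.ne', Real.log_one, add_sub_cancel_right, sub_zero, div_self hlog] at h
  have ev1 : ∀ᶠ u in nhdsWithin (0:ℝ) (Set.Ioi 0), u < 1 ∧ lam * u < 1 := by
    filter_upwards [Ioo_mem_nhdsGT (show (0:ℝ) < 1 from one_pos),
      Ioo_mem_nhdsGT (show (0:ℝ) < 1 / lam by positivity)] with u h1 h2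
    refine ⟨h1.2, ?_⟩
    have := (lt_div_iff₀ hl).1 h2.2
    linarith
  filter_upwards [h.eventually (lt_mem_nhds (show 1 - ε < 1 by linarith)),
    h.eventually (gt_mem_nhds (show 1 < 1 + ε by linarith)), ev1, self_mem_nhdsWithin]
    with u h1 h2 h3 hu
  have hu : 0 < u := hu
  rw [piece_vol μ q u hq hq1 hu h3.1, piece_vol μ q (lam * u) hq hq1 (by positivity) h3.2]
  rw [show u * (q * lam) = q * (lam * u) by ring, show u * lam = lam * u by ring,
    show u * q = q * u by ring, mul_one] at h1 h2
  set A := quantileFun (distFun μ) (1 - q * (lam * u)) - quantileFun (distFun μ) (1 - lam * u)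
  set B := quantileFun (distFun μ) (1 - q * u) - quantileFun (distFun μ) (1 - u) with hB
  have hB0 : 0 ≤ B := by
    have e1 := aux_Ici μ (1 - u) (by linarith) (by linarith)
    have e2 := aux_Ici μ (1 - q * u) (by nlinarith) (by nlinarith)
    have : quantileFun (distFun μ) (1 - q * u) ∈ Set.Ici (quantileFun (distFun μ) (1 - u)) := by
      rw [← e1]
      have : quantileFun (distFun μ) (1 - q * u) ∈
        Set.Ici (quantileFun (distFun μ) (1 - q * u)) := Set.self_mem_Ici
      rw [← e2] at this
      have h5 : 1 - q * u ≤ distFun μ (quantileFun (distFun μ) (1 - q * u)) := this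
      show 1 - u ≤ _
      nlinarith
    have := Set.mem_Ici.1 this
    linarith
  have hBne : B ≠ 0 := by
    intro h0
    rw [h0, div_zero] at h1
    linarith
  have hBpos : 0 < B := lt_of_le_of_ne hB0 hBne.symm
  rw [lt_div_iff₀ hBpos] at h1
  rw [div_lt_iff₀ hBpos] at h2
  refine ⟨by simpa using hBpos, ?_, ?_⟩
  · rw [← ENNReal.ofReal_mul (by linarith)]
    exact ENNReal.ofReal_le_ofReal h1.le
  · rw [← ENNReal.ofReal_mul (by linarith)]
    exact ENNReal.ofReal_le_ofReal h2.le

theorem T_ratio (μ : Measure ℝ) [IsProbabilityMeasure μ]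
    (hD : DeHaanGumbel (quantileFun (distFun μ))) (β q ε lam : ℝ) (hq : 0 < q) (hq1 : q < 1)
    (he : 0 < ε) (he1 : ε < 1) (hl : 0 < lam) :
    ∀ᶠ s in nhdsWithin (0:ℝ) (Set.Ioi 0),
      bigT μ β q s ≠ 0 ∧
      ENNReal.ofReal (1 - ε) * bigT μ β q s ≤ bigT μ β q (lam * s) ∧
      bigT μ β q (lam * s) ≤ ENNReal.ofReal (1 + ε) * bigT μ β q s := by
  have h := V_ratio μ hD q ε lam hq hq1 he he1 hl
  obtain ⟨δ, hδ, hV⟩ := mem_nhdsGT_iff_exists_Ioo_subset.1 h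
  have hδ : 0 < δ := hδ
  filter_upwards [Ioo_mem_nhdsGT hδ] with s hs
  have hk : ∀ k : ℕ, s * q ^ k ∈ Set.Ioo 0 δ := fun k => by
    have h3 : 0 < q ^ k := pow_pos hq k
    have : q ^ k ≤ 1 := pow_le_one₀ hq.le hq1.le
    have := hs.1
    have := hs.2
    exact ⟨by positivity, by nlinarith⟩
  refine ⟨?_, ?_, ?_⟩
  · intro h0
    have := ENNReal.tsum_eq_zero.1 h0 0
    have h2 := (hV (hk 0)).1
    simp at this h2
    exact h2 this
  · rw [bigT, bigT, ← ENNReal.tsum_mul_left]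
    refine ENNReal.tsum_le_tsum fun k => ?_
    rw [mul_left_comm, mul_assoc lam]
    gcongr
    exact (hV (hk k)).2.1
  · rw [bigT, bigT, ← ENNReal.tsum_mul_left]
    refine ENNReal.tsum_le_tsum fun k => ?_
    rw [mul_left_comm, mul_assoc lam]
    gcongr
    exact (hV (hk k)).2.2

theorem c_bounds (μ : Measure ℝ) [IsProbabilityMeasure μ]
    (hD : DeHaanGumbel (quantileFun (distFun μ))) (β : ℝ) (hβ : 0 < β)
    (hfin : ∀ᶠ s in nhdsWithin (0:ℝ) (Set.Ioi 0),
      IntegrableOn (fun u : ℝ => (1 - u) ^ β) (Set.Ioo (1 - s) 1) (dQ μ))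
    (q ε : ℝ) (hq : 0 < q) (hq1 : q < 1)
    (he : 0 < ε) (he1 : ε < 1) :
    ∀ᶠ s in nhdsWithin (0:ℝ) (Set.Ioi 0),
      bigT μ β q s ≠ ⊤ ∧ 0 < (bigT μ β q s).toReal ∧
      (q ^ β) ^ 2 * (1 - ε) * (bigT μ β q s).toReal ≤ cBeta μ s β ∧
      cBeta μ s β ≤ (bigT μ β q s).toReal := by
  filter_upwards [hfin, T_ratio μ hD β q ε q hq hq1 he he1 hq, self_mem_nhdsWithin]
    with s hf ⟨hT0, hT1, hT2⟩ hs
  have hs : 0 < s := hs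
  have hI := fin_of μ β s hf
  have up := (I_le_J μ β s).trans (J_le μ β q s hβ hq hq1 hs)
  have lo := (J_ge μ β q (q * s) hβ hq hq1 (by positivity)).trans (J_le_I μ β s q hq1 hs)
  have lo2 : ENNReal.ofReal ((q * (q * s)) ^ β * (1 - ε)) * bigT μ β q s ≤ bigI μ β s := by
    refine le_trans ?_ lo
    rw [ENNReal.ofReal_mul (by positivity), mul_assoc]
    gcongr
  have hpos : 0 < (q * (q * s)) ^ β * (1 - ε) := mul_pos (by positivity) (by linarith)
  have hTt : bigT μ β q s ≠ ⊤ := by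
    intro h
    rw [h, ENNReal.mul_top (by simpa using hpos)] at lo2
    exact hI (top_le_iff.1 lo2)
  have hsb : 0 < s ^ β := by positivity
  refine ⟨hTt, ENNReal.toReal_pos hT0 hTt, ?_, ?_⟩
  · have := ENNReal.toReal_mono hI lo2
    rw [ENNReal.toReal_mul, ENNReal.toReal_ofReal hpos.le] at this
    rw [cBeta, int_eq, Real.rpow_neg hs.le, ← div_eq_inv_mul, le_div_iff₀ hsb]
    rw [Real.mul_rpow hq.le (by positivity), Real.mul_rpow hq.le hs.le] at this
    linarith
  · have := ENNReal.toReal_mono (ENNReal.mul_ne_top ENNReal.ofReal_ne_top hTt) up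
    rw [ENNReal.toReal_mul, ENNReal.toReal_ofReal hsb.le] at this
    rw [cBeta, int_eq, Real.rpow_neg hs.le, ← div_eq_inv_mul, div_le_iff₀ hsb]
    linarith

theorem ratio_bounds (μ : Measure ℝ) [IsProbabilityMeasure μ]
    (hD : DeHaanGumbel (quantileFun (distFun μ))) (β : ℝ) (hβ : 0 < β)
    (hfin : ∀ᶠ s in nhdsWithin (0:ℝ) (Set.Ioi 0),
      IntegrableOn (fun u : ℝ => (1 - u) ^ β) (Set.Ioo (1 - s) 1) (dQ μ))
    (lam : ℝ) (hl : 0 < lam) (ε : ℝ) (he : 0 < ε) (he1 : ε < 1) :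
    ∀ᶠ s in nhdsWithin (0:ℝ) (Set.Ioi 0),
      ((1 - ε) ^ β) ^ 2 * (1 - ε) * (1 - ε) ≤ cBeta μ (lam * s) β / cBeta μ s β ∧
      cBeta μ (lam * s) β / cBeta μ s β ≤ (1 + ε) / (((1 - ε) ^ β) ^ 2 * (1 - ε)) := by
  have hq : 0 < 1 - ε := by linarith
  have hq1 : 1 - ε < 1 := by linarith
  have hc := c_bounds μ hD β hβ hfin (1 - ε) ε hq hq1 he he1
  have hmap : Tendsto (fun s : ℝ => lam * s) (nhdsWithin 0 (Set.Ioi 0))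
      (nhdsWithin 0 (Set.Ioi 0)) := by
    apply tendsto_nhdsWithin_of_tendsto_nhds_of_eventually_within
    · have : Tendsto (fun s : ℝ => lam * s) (nhds 0) (nhds (lam * 0)) :=
        (continuous_const.mul continuous_id).tendsto 0
      rw [mul_zero] at this
      exact this.mono_left nhdsWithin_le_nhds
    · filter_upwards [self_mem_nhdsWithin] with s hs
      exact mul_pos hl hs
  filter_upwards [hc, hmap.eventually hc, T_ratio μ hD β (1 - ε) ε lam hq hq1 he he1 hl]
    with s ⟨t1, p1, l1, u1⟩ ⟨t2, p2, l2, u2⟩ ⟨_, r1, r2⟩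
  have r1 := ENNReal.toReal_mono t2 r1
  have r2 := ENNReal.toReal_mono (ENNReal.mul_ne_top ENNReal.ofReal_ne_top t1) r2
  rw [ENNReal.toReal_mul, ENNReal.toReal_ofReal (by linarith)] at r1 r2
  set a := (bigT μ β (1 - ε) s).toReal
  set b := (bigT μ β (1 - ε) (lam * s)).toReal
  set K := ((1 - ε) ^ β) ^ 2 * (1 - ε) with hK
  have hKp : 0 < K := by positivity
  have hcp : 0 < cBeta μ s β := lt_of_lt_of_le (by positivity) l1
  constructor
  · rw [le_div_iff₀ hcp]
    calc K * (1 - ε) * cBeta μ s β ≤ K * (1 - ε) * a := by gcongr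
      _ = K * ((1 - ε) * a) := by ring
      _ ≤ K * b := by gcongr
      _ ≤ _ := l2
  · rw [div_le_div_iff₀ hcp hKp]
    calc cBeta μ (lam * s) β * K ≤ ((1 + ε) * a) * K := by
          gcongr
          exact u2.trans r2
      _ = (1 + ε) * (K * a) := by ring
      _ ≤ _ := by gcongr

/-- **Lemma 2.** If `F ∈ D(Λ)` then `s ↦ c(s,β)` is slowly varying at zero
for each `β > 0`. -/
theorem cBeta_slowly_varying
    (μ : Measure ℝ) [IsProbabilityMeasure μ] (F Q : ℝ → ℝ)
    (hF : F = distFun μ) (hQ : Q = quantileFun F)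
    (hD : DeHaanGumbel Q) (β : ℝ) (hβ : 0 < β)
    (hfin : ∀ᶠ s in nhdsWithin (0:ℝ) (Set.Ioi 0),
      IntegrableOn (fun u : ℝ => (1 - u) ^ β) (Set.Ioo (1 - s) 1) (dQ μ)) :
    ∀ lam : ℝ, 0 < lam →
      Tendsto (fun s : ℝ => cBeta μ (lam * s) β / cBeta μ s β)
        (nhdsWithin 0 (Set.Ioi 0)) (nhds 1) := by
  subst hQ
  subst hF
  intro lam hl
  have hb := ratio_bounds μ hD β hβ hfin lam hl
  have hpow : Tendsto (fun ε : ℝ => (1 - ε) ^ β) (nhdsWithin 0 (Set.Ioi 0)) (nhds 1) := by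
    have h1 : ContinuousAt (fun ε : ℝ => (1 - ε) ^ β) 0 :=
      ContinuousAt.rpow_const (by fun_prop) (Or.inr hβ.le)
    have h2 : Tendsto (fun ε : ℝ => (1 - ε) ^ β) (nhds 0) (nhds ((1 - 0) ^ β)) := h1
    rw [sub_zero, Real.one_rpow] at h2
    exact h2.mono_left nhdsWithin_le_nhds
  have hid : Tendsto (fun ε : ℝ => ε) (nhdsWithin 0 (Set.Ioi 0)) (nhds 0) :=
    tendsto_id.mono_left nhdsWithin_le_nhds
  have hsub : Tendsto (fun ε : ℝ => 1 - ε) (nhdsWithin 0 (Set.Ioi 0)) (nhds 1) := by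
    simpa using hid.const_sub 1
  have hadd : Tendsto (fun ε : ℝ => 1 + ε) (nhdsWithin 0 (Set.Ioi 0)) (nhds 1) := by
    simpa using hid.const_add 1
  have hK : Tendsto (fun ε : ℝ => ((1 - ε) ^ β) ^ 2 * (1 - ε)) (nhdsWithin 0 (Set.Ioi 0))
      (nhds 1) := by
    simpa using (hpow.pow 2).mul hsub
  have hlo : Tendsto (fun ε : ℝ => ((1 - ε) ^ β) ^ 2 * (1 - ε) * (1 - ε))
      (nhdsWithin 0 (Set.Ioi 0)) (nhds 1) := by
    simpa using hK.mul hsub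
  have hup : Tendsto (fun ε : ℝ => (1 + ε) / (((1 - ε) ^ β) ^ 2 * (1 - ε)))
      (nhdsWithin 0 (Set.Ioi 0)) (nhds 1) := by
    have h3 := hadd.div hK one_ne_zero
    rw [div_one] at h3
    exact h3
  have hε : ∀ᶠ ε in nhdsWithin (0:ℝ) (Set.Ioi 0), ε ∈ Set.Ioo (0:ℝ) 1 := Ioo_mem_nhdsGT one_pos
  refine tendsto_order.2 ⟨fun a ha => ?_, fun b hb' => ?_⟩
  · obtain ⟨ε, h1, h2⟩ := ((hlo.eventually (lt_mem_nhds ha)).and hε).exists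
    filter_upwards [hb ε h2.1 h2.2] with s hs
    exact lt_of_lt_of_le h1 hs.1
  · obtain ⟨ε, h1, h2⟩ := ((hup.eventually (gt_mem_nhds hb')).and hε).exists
    filter_upwards [hb ε h2.1 h2.2] with s hs
    exact lt_of_le_of_lt hs.2 h1
end
end

section
/- Suppose F ∈ D(Λ), i.e. its quantile function Q satisfies de Haan's criterion. Then for each fixed x > 0, (Q(1−xs) − Q(1−s))/c(s) → −log x as s ↓ 0. -/
open MeasureTheory Filter Set

noncomputable section

lemma aux_gc (μ : Measure ℝ) [IsProbabilityMeasure μ] (t : ℝ) (h0 : 0 < t) (h1 : t < 1) (x : ℝ) :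
    t ≤ distFun μ x ↔ quantileFun (distFun μ) t ≤ x := by
  have hF : distFun μ = fun x => ProbabilityTheory.cdf μ x := by
    funext x
    rw [ProbabilityTheory.cdf_eq_real]; rfl
  have hmono : Monotone (distFun μ) := by
    rw [hF]; exact ProbabilityTheory.monotone_cdf μ
  have hbdd : BddBelow {x : ℝ | t ≤ distFun μ x} := by
    have h := (ProbabilityTheory.tendsto_cdf_atBot μ).eventually (gt_mem_nhds h0)
    obtain ⟨a, ha⟩ := h.exists
    refine ⟨a, fun y hy => ?_⟩
    by_contra hlt
    push Not at hlt
    have h2 := hmono hlt.le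
    have h3 : distFun μ a = ProbabilityTheory.cdf μ a := by rw [hF]
    simp only [mem_ofPred_eq] at hy
    linarith
  have hne : {x : ℝ | t ≤ distFun μ x}.Nonempty := by
    have h := (ProbabilityTheory.tendsto_cdf_atTop μ).eventually (lt_mem_nhds h1)
    obtain ⟨a, ha⟩ := h.exists
    refine ⟨a, ?_⟩
    have h3 : distFun μ a = ProbabilityTheory.cdf μ a := by rw [hF]
    simp only [mem_ofPred_eq]
    linarith
  constructor
  · intro h
    exact csInf_le hbdd h
  · intro h
    have key : ∀ y, x < y → t ≤ distFun μ y := by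
      intro y hy
      obtain ⟨z, hz, hzy⟩ := exists_lt_of_csInf_lt hne (lt_of_le_of_lt h hy)
      exact le_trans hz (hmono hzy.le)
    have hr : Tendsto (distFun μ) (nhdsWithin x (Ioi x)) (nhds (distFun μ x)) := by
      have := (ProbabilityTheory.cdf μ).right_continuous x
      rw [hF]
      exact this.tendsto.mono_left (nhdsWithin_mono _ Ioi_subset_Ici_self)
    refine ge_of_tendsto hr ?_
    filter_upwards [self_mem_nhdsWithin] with y hy using key y hy

lemma aux_meas (μ : Measure ℝ) [IsProbabilityMeasure μ] : Measurable (distFun μ) := by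
  have hF : distFun μ = fun x => ProbabilityTheory.cdf μ x := by
    funext x
    rw [ProbabilityTheory.cdf_eq_real]; rfl
  rw [hF]; exact (ProbabilityTheory.monotone_cdf μ).measurable

lemma aux_dQ (μ : Measure ℝ) [IsProbabilityMeasure μ] (a b : ℝ) (ha : 0 < a) (hab : a ≤ b)
    (hb : b < 1) :
    dQ μ (Ico a b) = ENNReal.ofReal (quantileFun (distFun μ) b - quantileFun (distFun μ) a) := by
  unfold dQ
  rw [Measure.map_apply (aux_meas μ) measurableSet_Ico]
  have : distFun μ ⁻¹' Ico a b
      = Ico (quantileFun (distFun μ) a) (quantileFun (distFun μ) b) := by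
    ext x
    simp only [mem_preimage, mem_Ico]
    rw [aux_gc μ a ha (by linarith) x, ← not_le, aux_gc μ b (by linarith) hb x, not_le]
  rw [this, Real.volume_Ico]

lemma aux_Qmono (μ : Measure ℝ) [IsProbabilityMeasure μ] (a b : ℝ) (ha : 0 < a) (hab : a ≤ b)
    (hb : b < 1) : quantileFun (distFun μ) a ≤ quantileFun (distFun μ) b := by
  rw [← aux_gc μ a ha (by linarith)]
  exact hab.trans ((aux_gc μ b (by linarith) hb _).2 le_rfl)

/-- Closed-at-left version of the integral. -/
def auxI (μ : Measure ℝ) (s : ℝ) : ℝ := ∫ u in Set.Ico (1 - s) 1, (1 - u) ∂(dQ μ)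

lemma auxI_nonneg (μ : Measure ℝ) (s : ℝ) : 0 ≤ auxI μ s :=
  setIntegral_nonneg measurableSet_Ico (fun u hu => by linarith [hu.2])

lemma auxI_step (μ : Measure ℝ) [IsProbabilityMeasure μ] (l s : ℝ) (hl0 : 0 < l) (hl1 : l < 1)
    (hs0 : 0 < s) (hs1 : s < 1)
    (hint : IntegrableOn (fun u : ℝ => 1 - u) (Ico (1 - s) 1) (dQ μ)) :
    l * s * (quantileFun (distFun μ) (1 - s * l) - quantileFun (distFun μ) (1 - s))
      ≤ auxI μ s - auxI μ (s * l) ∧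
    auxI μ s - auxI μ (s * l) ≤
      s * (quantileFun (distFun μ) (1 - s * l) - quantileFun (distFun μ) (1 - s)) := by
  have hsl : s * l < s := by nlinarith
  have hsl0 : 0 < s * l := by positivity
  have hm := aux_dQ μ (1 - s) (1 - s * l) (by linarith) (by linarith) (by linarith)
  have hq := aux_Qmono μ (1 - s) (1 - s * l) (by linarith) (by linarith) (by linarith)
  set D := quantileFun (distFun μ) (1 - s * l) - quantileFun (distFun μ) (1 - s) with hD
  have hD0 : 0 ≤ D := by linarith
  have hreal : (dQ μ).real (Ico (1 - s) (1 - s * l)) = D := by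
    rw [Measure.real, hm, ENNReal.toReal_ofReal hD0]
  have hfin : dQ μ (Ico (1 - s) (1 - s * l)) ≠ ⊤ := by rw [hm]; exact ENNReal.ofReal_ne_top
  have hi1 : IntegrableOn (fun u : ℝ => 1 - u) (Ico (1 - s) (1 - s * l)) (dQ μ) :=
    hint.mono_set (Ico_subset_Ico_right (by linarith))
  have hi2 : IntegrableOn (fun u : ℝ => 1 - u) (Ico (1 - s * l) 1) (dQ μ) :=
    hint.mono_set (Ico_subset_Ico_left (by linarith))
  have heq : auxI μ s - auxI μ (s * l) = ∫ u in Ico (1 - s) (1 - s * l), (1 - u) ∂(dQ μ) := by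
    unfold auxI
    rw [← Ico_union_Ico_eq_Ico (a := 1 - s) (b := 1 - s * l) (c := 1) (by linarith) (by linarith),
      setIntegral_union (Ico_disjoint_Ico_same) measurableSet_Ico hi1 hi2]
    ring
  have hc : ∀ k : ℝ, IntegrableOn (fun _ : ℝ => k) (Ico (1 - s) (1 - s * l)) (dQ μ) :=
    fun k => integrableOn_const hfin
  have hcv : ∀ k : ℝ, ∫ _ in Ico (1 - s) (1 - s * l), k ∂(dQ μ) = D * k := by
    intro k
    rw [setIntegral_const, hreal, smul_eq_mul]
  rw [heq]
  constructor
  · have := setIntegral_mono_on (hc (l * s)) hi1 measurableSet_Ico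
      (fun u hu => by linarith [hu.2, mul_comm l s])
    rw [hcv] at this
    linarith
  · have := setIntegral_mono_on hi1 (hc s) measurableSet_Ico
      (fun u hu => by linarith [hu.1])
    rw [hcv] at this
    linarith

lemma auxI_tendsto (μ : Measure ℝ) (l s : ℝ) (hl0 : 0 < l) (hl1 : l < 1)
    (hs0 : 0 < s) (hint : IntegrableOn (fun u : ℝ => 1 - u) (Ico (1 - s) 1) (dQ μ)) :
    Tendsto (fun k : ℕ => auxI μ (s * l ^ k)) atTop (nhds 0) := by
  have hlim : Tendsto (fun k : ℕ => s * l ^ k) atTop (nhds 0) := by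
    simpa using (tendsto_pow_atTop_nhds_zero_of_lt_one hl0.le hl1).const_mul s
  have h := tendsto_setIntegral_of_antitone (μ := dQ μ) (f := fun u : ℝ => 1 - u)
    (s := fun k : ℕ => Ico (1 - s * l ^ k) 1) (fun _ => measurableSet_Ico)
    (by
      intro i j hij
      refine Ico_subset_Ico_left ?_
      have := mul_le_mul_of_nonneg_left (pow_le_pow_of_le_one hl0.le hl1.le hij) hs0.le
      linarith) ⟨0, by simpa using hint⟩
  have he : (⋂ k : ℕ, Ico (1 - s * l ^ k) (1:ℝ)) = ∅ := by
    rw [eq_empty_iff_forall_notMem]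
    intro u hu
    rw [mem_iInter] at hu
    have h1 := (hu 0).2
    have h2 : ∀ k : ℕ, 1 - u ≤ s * l ^ k := fun k => by linarith [(hu k).1]
    have := ge_of_tendsto' hlim h2
    linarith
  rw [he] at h
  simpa [auxI] using h

lemma aux_upper (I D : ℝ → ℝ) (l q s0 : ℝ) (hl0 : 0 < l) (hl1 : l < 1) (hq : l * q < 1)
    (hstep : ∀ s, 0 < s → s < s0 → I s - I (s * l) ≤ s * D s)
    (hD : ∀ s, 0 < s → s < s0 → 0 ≤ D s)
    (hDq : ∀ s, 0 < s → s < s0 → D (s * l) ≤ q * D s)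
    (hlim : ∀ s, 0 < s → s < s0 → Tendsto (fun k : ℕ => I (s * l ^ k)) atTop (nhds 0))
    (s : ℝ) (hs : 0 < s) (hs' : s < s0) : I s ≤ s * D s / (1 - l * q) := by
  set K := 1 / (1 - l * q) with hK
  have hKpos : 0 < K := by rw [hK]; apply div_pos one_pos; linarith
  have hKe : K * (1 - l * q) = 1 := by rw [hK]; field_simp [show (1 - l * q) ≠ 0 by linarith]
  have h1 : ∀ s, 0 < s → s < s0 → I s - K * (s * D s) ≤ I (s * l) - K * (s * l * D (s * l)) := by
    intro s h h'
    have a := hstep s h h'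
    have b := mul_le_mul_of_nonneg_left (hDq s h h') (show 0 ≤ K * (s * l) by positivity)
    have e : s * D s = K * (1 - l * q) * (s * D s) := by rw [hKe, one_mul]
    nlinarith
  have hlk : ∀ k : ℕ, 0 < s * l ^ k ∧ s * l ^ k < s0 := by
    intro k
    have := pow_le_one₀ (n := k) hl0.le hl1.le
    exact ⟨by positivity, by nlinarith⟩
  have h2 : ∀ k : ℕ, I s - K * (s * D s) ≤ I (s * l ^ k) - K * (s * l ^ k * D (s * l ^ k)) := by
    intro k
    induction k with
    | zero => simp
    | succ k ih =>
      have := h1 _ (hlk k).1 (hlk k).2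
      rw [pow_succ, show s * (l ^ k * l) = s * l ^ k * l by ring]
      linarith
  have h3 : ∀ k : ℕ, I s - K * (s * D s) ≤ I (s * l ^ k) := by
    intro k
    have a := h2 k
    have b := hD _ (hlk k).1 (hlk k).2
    have c : 0 ≤ K * (s * l ^ k * D (s * l ^ k)) :=
      mul_nonneg hKpos.le (mul_nonneg (hlk k).1.le b)
    linarith
  have h4 := ge_of_tendsto' (hlim s hs hs') h3
  have : s * D s / (1 - l * q) = K * (s * D s) := by rw [hK]; ring
  linarith

lemma aux_lower (I D : ℝ → ℝ) (l p s0 : ℝ) (hl0 : 0 < l) (hl1 : l < 1) (hp : l * p < 1)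
    (hstep : ∀ s, 0 < s → s < s0 → l * s * D s ≤ I s - I (s * l))
    (hI : ∀ s, 0 ≤ I s)
    (hDp : ∀ s, 0 < s → s < s0 → p * D s ≤ D (s * l))
    (hlim : ∀ s, 0 < s → s < s0 → Tendsto (fun k : ℕ => I (s * l ^ k)) atTop (nhds 0))
    (s : ℝ) (hs : 0 < s) (hs' : s < s0) : l * (s * D s) / (1 - l * p) ≤ I s := by
  set K := l / (1 - l * p) with hK
  have hKpos : 0 < K := by rw [hK]; apply div_pos hl0; linarith
  have hKe : K * (1 - l * p) = l := by rw [hK]; field_simp [show (1 - l * p) ≠ 0 by linarith]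
  have h1 : ∀ s, 0 < s → s < s0 → I (s * l) - K * (s * l * D (s * l)) ≤ I s - K * (s * D s) := by
    intro s h h'
    have a := hstep s h h'
    have b := mul_le_mul_of_nonneg_left (hDp s h h') (show 0 ≤ K * (s * l) by positivity)
    have e : l * (s * D s) = K * (1 - l * p) * (s * D s) := by rw [hKe]
    nlinarith
  have hlk : ∀ k : ℕ, 0 < s * l ^ k ∧ s * l ^ k < s0 := by
    intro k
    have := pow_le_one₀ (n := k) hl0.le hl1.le
    exact ⟨by positivity, by nlinarith⟩
  have h2 : ∀ k : ℕ, I (s * l ^ k) - K * (s * l ^ k * D (s * l ^ k)) ≤ I s - K * (s * D s) := by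
    intro k
    induction k with
    | zero => simp
    | succ k ih =>
      have := h1 _ (hlk k).1 (hlk k).2
      rw [pow_succ, show s * (l ^ k * l) = s * l ^ k * l by ring]
      linarith
  have h3 : ∀ k : ℕ, - (K / l) * I (s * l ^ k) ≤ I s - K * (s * D s) := by
    intro k
    have a := h2 k
    have b := hstep _ (hlk k).1 (hlk k).2
    have c := hI (s * l ^ k * l)
    have c' := hI (s * l ^ k)
    have d := mul_le_mul_of_nonneg_left (b.trans (sub_le_self _ c))
      (show 0 ≤ K / l by positivity)
    have e : K / l * (l * (s * l ^ k) * D (s * l ^ k)) = K * (s * l ^ k * D (s * l ^ k)) := by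
      field_simp
    linarith
  have h4 := le_of_tendsto' ((hlim s hs hs').const_mul (-(K / l))) h3
  have : l * (s * D s) / (1 - l * p) = K * (s * D s) := by rw [hK]; ring
  linarith

lemma aux_exists_q (A : ℝ) (hA : 1 < A) :
    ∃ l q : ℝ, 0 < l ∧ l < 1 ∧ 1 < q ∧ l * q < 1 ∧ (-Real.log l) / (1 - l * q) < A := by
  obtain ⟨l, hl, hl1⟩ := exists_between (show A⁻¹ < 1 from inv_lt_one_of_one_lt₀ hA)
  have hA0 : 0 < A := by linarith
  have hl0 : 0 < l := lt_trans (by positivity) hl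
  have h1 : -Real.log l ≤ l⁻¹ - 1 := by
    have := Real.log_le_sub_one_of_pos (inv_pos.2 hl0)
    rwa [Real.log_inv] at this
  have h2 : (-Real.log l) / (1 - l * 1) < A := by
    rw [div_lt_iff₀ (by linarith)]
    have e : l⁻¹ - 1 = l⁻¹ * (1 - l * 1) := by field_simp
    have : l⁻¹ < A := inv_lt_of_inv_lt₀ hA0 hl
    nlinarith
  have hc : ContinuousAt (fun q : ℝ => (-Real.log l) / (1 - l * q)) 1 := by
    refine ContinuousAt.div (by fun_prop) (by fun_prop) ?_
    linarith
  have e1 : ∀ᶠ q in nhdsWithin (1:ℝ) (Ioi 1), (-Real.log l) / (1 - l * q) < A :=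
    (hc.tendsto.mono_left nhdsWithin_le_nhds).eventually (gt_mem_nhds h2)
  have hc2 : ContinuousAt (fun q : ℝ => l * q) 1 := by fun_prop
  have e2 : ∀ᶠ q in nhdsWithin (1:ℝ) (Ioi 1), l * q < 1 :=
    (hc2.tendsto.mono_left nhdsWithin_le_nhds).eventually (gt_mem_nhds (by linarith))
  obtain ⟨q, hq1, hq2, hq3⟩ := (e1.and (e2.and self_mem_nhdsWithin)).exists
  exact ⟨l, q, hl0, hl1, hq3, hq2, hq1⟩

lemma aux_exists_p (a : ℝ) (ha : a < 1) :
    ∃ l p : ℝ, 0 < l ∧ l < 1 ∧ 0 < p ∧ p < 1 ∧ a < l ^ 2 * p / (1 - l * p) * (-Real.log l) := by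
  have hcl : ContinuousAt (fun l : ℝ => l ^ 2) 1 := by fun_prop
  have e0 : ∀ᶠ l in nhdsWithin (1:ℝ) (Iio 1), a < l ^ 2 :=
    (hcl.tendsto.mono_left nhdsWithin_le_nhds).eventually (lt_mem_nhds (by simpa using ha))
  have e0' : ∀ᶠ l in nhdsWithin (1:ℝ) (Iio 1), (0:ℝ) < l :=
    nhdsWithin_le_nhds (lt_mem_nhds one_pos)
  obtain ⟨l, hl, hl0, hl1⟩ := (e0.and (e0'.and self_mem_nhdsWithin)).exists
  replace hl1 : l < 1 := hl1
  have h1 : 1 - l ≤ -Real.log l := by linarith [Real.log_le_sub_one_of_pos hl0]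
  have h2 : a < l ^ 2 * 1 / (1 - l * 1) * (-Real.log l) := by
    have hpos : 0 < 1 - l := by linarith
    have : l ^ 2 * 1 / (1 - l * 1) * (1 - l) ≤ l ^ 2 * 1 / (1 - l * 1) * (-Real.log l) := by
      apply mul_le_mul_of_nonneg_left h1
      rw [mul_one, mul_one]; positivity
    have e : l ^ 2 * 1 / (1 - l * 1) * (1 - l) = l ^ 2 := by
      rw [mul_one, mul_one]; field_simp
    linarith
  have hc : ContinuousAt (fun p : ℝ => l ^ 2 * p / (1 - l * p) * (-Real.log l)) 1 := by
    refine ContinuousAt.mul (ContinuousAt.div (by fun_prop) (by fun_prop) ?_) (by fun_prop)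
    linarith
  have e1 : ∀ᶠ p in nhdsWithin (1:ℝ) (Iio 1), a < l ^ 2 * p / (1 - l * p) * (-Real.log l) :=
    (hc.tendsto.mono_left nhdsWithin_le_nhds).eventually (lt_mem_nhds h2)
  have e2 : ∀ᶠ p in nhdsWithin (1:ℝ) (Iio 1), (0:ℝ) < p :=
    nhdsWithin_le_nhds (lt_mem_nhds one_pos)
  obtain ⟨p, hp1, hp2, hp3⟩ := (e1.and (e2.and self_mem_nhdsWithin)).exists
  exact ⟨l, p, hl0, hl1, hp2, hp3, hp1⟩

lemma aux_cFun (μ : Measure ℝ) (s : ℝ) :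
    cFun μ s = s⁻¹ * ∫ u in Set.Ioo (1 - s) 1, (1 - u) ∂(dQ μ) := by
  simp [cFun, cBeta, Real.rpow_neg_one]

lemma aux_bounds (μ : Measure ℝ) [IsProbabilityMeasure μ] (Q : ℝ → ℝ)
    (hQ : Q = quantileFun (distFun μ)) (hD : DeHaanGumbel Q)
    (hc : ∀ᶠ s in nhdsWithin (0:ℝ) (Set.Ioi 0),
      IntegrableOn (fun u : ℝ => 1 - u) (Set.Ioo (1 - s) 1) (dQ μ) ∧ 0 < cFun μ s)
    (l p q : ℝ) (hl0 : 0 < l) (hl1 : l < 1) (hp0 : 0 < p) (hp : p < 1) (hq : 1 < q)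
    (hlq : l * q < 1) :
    ∀ᶠ s in nhdsWithin (0:ℝ) (Set.Ioi 0),
      0 < Q (1 - s * l) - Q (1 - s) ∧
      l ^ 2 * p / (1 - l * p) * (Q (1 - s * l) - Q (1 - s)) ≤ cFun μ s ∧
      cFun μ s ≤ (Q (1 - s * l) - Q (1 - s)) / (1 - l * q) := by
  have hlog : Real.log l < 0 := Real.log_neg hl0 hl1
  have hr := hD (l * l) l l 1 (by positivity) hl0 hl0 one_pos hl1.ne
  rw [Real.log_mul hl0.ne' hl0.ne', Real.log_one, add_sub_cancel_right, sub_zero,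
    div_self hlog.ne] at hr
  simp only [mul_one] at hr
  have hev := (hr.eventually (lt_mem_nhds hp)).and ((hr.eventually (gt_mem_nhds hq)).and
    (hc.and (show ∀ᶠ s in nhdsWithin (0:ℝ) (Set.Ioi 0), s < 1 from
      nhdsWithin_le_nhds (gt_mem_nhds one_pos))))
  obtain ⟨s0, hs0, hsub⟩ := (mem_nhdsGT_iff_exists_Ioo_subset).1 hev
  simp only [mem_Ioi] at hs0
  have hall : ∀ s, 0 < s → s < s0 → _ := fun s h h' => hsub ⟨h, h'⟩
  set D : ℝ → ℝ := fun s => Q (1 - s * l) - Q (1 - s) with hDdef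
  have hlt : ∀ s, 0 < s → s < s0 → s < 1 := fun s h h' => (hall s h h').2.2.2
  have hD0 : ∀ s, 0 < s → s < s0 → 0 ≤ D s := by
    intro s h h'
    have h1 := hlt s h h'
    have := aux_Qmono μ (1 - s) (1 - s * l) (by linarith) (by nlinarith) (by nlinarith)
    simp only [hDdef, hQ]; linarith
  have hDpos : ∀ s, 0 < s → s < s0 → 0 < D s := by
    intro s h h'
    refine lt_of_le_of_ne (hD0 s h h') ?_
    intro h0
    have h1 := (hall s h h').1
    have h2 : Q (1 - s * l) - Q (1 - s) = 0 := h0.symm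
    rw [h2, div_zero] at h1
    linarith
  have hDsl : ∀ s, D (s * l) = Q (1 - s * (l * l)) - Q (1 - s * l) := by
    intro s; simp only [hDdef, mul_assoc]
  have hDp : ∀ s, 0 < s → s < s0 → p * D s ≤ D (s * l) := by
    intro s h h'
    have h1 := (hall s h h').1
    rw [lt_div_iff₀ (hDpos s h h')] at h1
    rw [hDsl]; exact h1.le
  have hDq : ∀ s, 0 < s → s < s0 → D (s * l) ≤ q * D s := by
    intro s h h'
    have h1 := (hall s h h').2.1
    rw [div_lt_iff₀ (hDpos s h h')] at h1
    rw [hDsl]; exact h1.le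
  have hint : ∀ s, 0 < s → s < s0 →
      IntegrableOn (fun u : ℝ => 1 - u) (Ico (1 - s) 1) (dQ μ) := by
    intro s h h'
    obtain ⟨t, ht, ht'⟩ := exists_between h'
    refine ((hall t (h.trans ht) ht').2.2.1.1).mono_set ?_
    intro u hu
    exact ⟨by linarith [hu.1], hu.2⟩
  have hlim := fun s (h : 0 < s) (h' : s < s0) => auxI_tendsto μ l s hl0 hl1 h (hint s h h')
  have hstep := fun s (h : 0 < s) (h' : s < s0) =>
    auxI_step μ l s hl0 hl1 h (hlt s h h') (hint s h h')
  rw [← hQ] at hstep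
  have hlp : l * p < 1 := by nlinarith
  have hup := aux_upper (auxI μ) D l q s0 hl0 hl1 hlq (fun s h h' => (hstep s h h').2) hD0 hDq hlim
  have hlo := aux_lower (auxI μ) D l p s0 hl0 hl1 hlp (fun s h h' => (hstep s h h').1)
    (auxI_nonneg μ) hDp hlim
  have hmem : Ioo 0 s0 ∈ nhdsWithin (0:ℝ) (Ioi 0) := Ioo_mem_nhdsGT hs0
  filter_upwards [hmem] with s hs
  obtain ⟨h, h'⟩ := hs
  have hsl : s * l < s := by nlinarith
  have hsl0 : 0 < s * l := by positivity
  have hnn : ∀ {T : Set ℝ}, MeasurableSet T → T ⊆ Iio 1 →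
      0 ≤ᵐ[(dQ μ).restrict T] (fun u : ℝ => 1 - u) := by
    intro T hT hT1
    refine (ae_restrict_iff' hT).2 (Eventually.of_forall fun u hu => ?_)
    have := hT1 hu
    simp only [mem_Iio] at this
    simp only [Pi.zero_apply]; linarith
  have hiO := (hall s h h').2.2.1.1
  have hle1 : (∫ u in Set.Ioo (1 - s) 1, (1 - u) ∂(dQ μ)) ≤ auxI μ s :=
    setIntegral_mono_set (hint s h h') (hnn measurableSet_Ico fun u hu => hu.2)
      (HasSubset.Subset.eventuallyLE Ioo_subset_Ico_self)
  have hle2 : auxI μ (s * l) ≤ ∫ u in Set.Ioo (1 - s) 1, (1 - u) ∂(dQ μ) :=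
    setIntegral_mono_set hiO (hnn measurableSet_Ioo fun u hu => hu.2)
      (HasSubset.Subset.eventuallyLE fun u hu => ⟨by linarith [hu.1], hu.2⟩)
  refine ⟨hDpos s h h', ?_, ?_⟩
  · rw [aux_cFun, inv_mul_eq_div, le_div_iff₀ h]
    refine le_trans ?_ hle2
    refine le_trans ?_ (hlo (s * l) hsl0 (hsl.trans h'))
    have h1 := hDp s h h'
    have h2 : l ^ 2 * p / (1 - l * p) * (Q (1 - s * l) - Q (1 - s)) * s
        = l ^ 2 * s / (1 - l * p) * (p * D s) := by simp only [hDdef]; ring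
    have h3 : l * (s * l * D (s * l)) / (1 - l * p)
        = l ^ 2 * s / (1 - l * p) * D (s * l) := by ring
    rw [h2, h3]
    refine mul_le_mul_of_nonneg_left h1 ?_
    have : 0 < 1 - l * p := by linarith
    positivity
  · rw [aux_cFun, inv_mul_eq_div, div_le_iff₀ h]
    refine hle1.trans ((hup s h h').trans (le_of_eq ?_))
    simp only [hDdef]; ring

/-- **Lemma 4.** If `F ∈ D(Λ)` then for each fixed `x > 0`,
`(Q(1-xs) - Q(1-s))/c(s) → -log x` as `s ↓ 0`. -/
theorem quantile_diff_div_c_tendsto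
    (μ : Measure ℝ) [IsProbabilityMeasure μ] (F Q : ℝ → ℝ)
    (hF : F = distFun μ) (hQ : Q = quantileFun F)
    (hD : DeHaanGumbel Q)
    (hc : ∀ᶠ s in nhdsWithin (0:ℝ) (Set.Ioi 0),
      IntegrableOn (fun u : ℝ => 1 - u) (Set.Ioo (1 - s) 1) (dQ μ) ∧ 0 < cFun μ s)
    (x : ℝ) (hx : 0 < x) :
    Tendsto (fun s : ℝ => (Q (1 - x * s) - Q (1 - s)) / cFun μ s)
      (nhdsWithin 0 (Set.Ioi 0)) (nhds (-Real.log x)) := by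
  subst hF
  have hb : Real.exp (-1) < 1 := by simp
  have hb0 : 0 < Real.exp (-1) := Real.exp_pos _
  have hratio : ∀ y : ℝ, 0 < y → Tendsto
      (fun s : ℝ => (Q (1 - s * y) - Q (1 - s)) / (Q (1 - s * Real.exp (-1)) - Q (1 - s)))
      (nhdsWithin 0 (Set.Ioi 0)) (nhds (-Real.log y)) := by
    intro y hy
    have h := hD y (Real.exp (-1)) 1 1 hy hb0 one_pos one_pos hb.ne
    simpa [div_neg] using h
  have hbpos : ∀ᶠ s in nhdsWithin (0:ℝ) (Set.Ioi 0),
      0 < Q (1 - s * Real.exp (-1)) - Q (1 - s) := by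
    obtain ⟨q, hq, hq'⟩ := exists_between (show (1:ℝ) < (Real.exp (-1))⁻¹ from
      (one_lt_inv₀ hb0).2 hb)
    have := aux_bounds μ Q hQ hD hc (Real.exp (-1)) (1/2) q hb0 hb (by norm_num) (by norm_num) hq
      (by rw [lt_inv_comm₀ (by linarith) hb0] at hq'
          calc Real.exp (-1) * q < q⁻¹ * q := by
                apply mul_lt_mul_of_pos_right hq'; linarith
            _ = 1 := inv_mul_cancel₀ (by linarith))
    exact this.mono fun s hs => hs.1
  have hcb : Tendsto (fun s : ℝ => cFun μ s / (Q (1 - s * Real.exp (-1)) - Q (1 - s)))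
      (nhdsWithin 0 (Set.Ioi 0)) (nhds 1) := by
    rw [tendsto_order]
    constructor
    · intro a ha
      obtain ⟨l, p, hl0, hl1, hp0, hp1, hap⟩ := aux_exists_p a ha
      obtain ⟨q, hq, hq'⟩ := exists_between (show (1:ℝ) < l⁻¹ from (one_lt_inv₀ hl0).2 hl1)
      have hlq : l * q < 1 := by
        have := mul_lt_mul_of_pos_left hq' hl0
        rwa [mul_inv_cancel₀ hl0.ne'] at this
      have hB := aux_bounds μ Q hQ hD hc l p q hl0 hl1 hp0 hp1 hq hlq
      have hT := ((hratio l hl0).const_mul (l ^ 2 * p / (1 - l * p))).eventually (lt_mem_nhds hap)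
      filter_upwards [hB, hT, hbpos] with s h1 h2 h3
      refine lt_of_lt_of_le h2 ?_
      rw [← mul_div_assoc]
      exact div_le_div_of_nonneg_right h1.2.1 h3.le
    · intro A hA
      obtain ⟨l, q, hl0, hl1, hq, hlq, hAq⟩ := aux_exists_q A hA
      have hB := aux_bounds μ Q hQ hD hc l (1/2) q hl0 hl1 (by norm_num) (by norm_num) hq hlq
      have hT := ((hratio l hl0).div_const (1 - l * q)).eventually (gt_mem_nhds hAq)
      filter_upwards [hB, hT, hbpos] with s h1 h2 h3
      refine lt_of_le_of_lt ?_ h2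
      rw [div_right_comm]
      exact div_le_div_of_nonneg_right h1.2.2 h3.le
  have hfin := (hratio x hx).div hcb one_ne_zero
  rw [div_one] at hfin
  refine hfin.congr' ?_
  filter_upwards [hbpos] with s hs
  simp only [Pi.div_apply]
  rw [div_div_div_cancel_right₀ hs.ne', mul_comm s x]
end
end

section
/- Suppose F ∈ D*(Λ): there exist s₀ ∈ (0,1), a ∈ ℝ, and a strictly positive measurable function r slowly varying at zero such that Q(1−s) = a + ∫_s^1 u^{−1} r(u) du for all 0 < s ≤ s₀ (the integral being finite). Then F ∈ D(Λ), i.e. Q satisfies de Haan's criterion: for every x, y, z, w > 0 with y ≠ w, (Q(1−sx) − Q(1−sz))/(Q(1−sy) − Q(1−sw)) → (log x − log z)/(log y − log w) as s ↓ 0. -/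
open MeasureTheory Filter Set

noncomputable section

theorem aux_step (g : ℝ → ℝ) (T : ℝ) (hg : ∀ t c, T ≤ t → 0 < c → g t < g (t + c))
    (h1 : ∀ l c, 0 < c →
      Tendsto (fun t => (g (t + l + c) - g (t + l)) / (g (t + c) - g t)) atTop (nhds 1))
    (d : ℝ) (hd : 0 < d) (n : ℕ) :
    Tendsto (fun t => (g (t + n * d) - g t) / (g (t + d) - g t)) atTop (nhds n) := by
  induction n with
  | zero => simp
  | succ n ih =>
    have := (h1 (n * d) d hd).add ih
    push_cast
    rw [add_comm (n : ℝ) 1]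
    refine this.congr (fun t => ?_)
    rw [← add_div]
    congr 1
    have : t + n * d + d = t + (1 + n) * d := by ring
    rw [this]; ring

theorem aux_rat (g : ℝ → ℝ) (T : ℝ) (hg : ∀ t c, T ≤ t → 0 < c → g t < g (t + c))
    (h1 : ∀ l c, 0 < c →
      Tendsto (fun t => (g (t + l + c) - g (t + l)) / (g (t + c) - g t)) atTop (nhds 1))
    (m n : ℕ) (hn : 0 < n) :
    Tendsto (fun t => (g (t + m / n) - g t) / (g (t + 1) - g t)) atTop (nhds ((m : ℝ) / n)) := by
  have hn' : (0 : ℝ) < n := by exact_mod_cast hn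
  have hd : (0 : ℝ) < 1 / n := by positivity
  have A := aux_step g T hg h1 (1 / n) hd m
  have B := aux_step g T hg h1 (1 / n) hd n
  refine (A.div B hn'.ne').congr' ?_
  filter_upwards [eventually_ge_atTop T] with t ht
  have h := hg t (1 / n) ht hd
  have e1 : (n : ℝ) * (1 / n) = 1 := by field_simp
  have e2 : (m : ℝ) * (1 / n) = m / n := by ring
  simp only [Pi.div_apply, e1, e2]
  rw [div_div_div_cancel_right₀ (sub_pos.2 h).ne']

theorem aux_ratQ (g : ℝ → ℝ) (T : ℝ) (hg : ∀ t c, T ≤ t → 0 < c → g t < g (t + c))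
    (h1 : ∀ l c, 0 < c →
      Tendsto (fun t => (g (t + l + c) - g (t + l)) / (g (t + c) - g t)) atTop (nhds 1))
    (q : ℚ) (hq : 0 ≤ q) :
    Tendsto (fun t => (g (t + q) - g t) / (g (t + 1) - g t)) atTop (nhds (q : ℝ)) := by
  have h := aux_rat g T hg h1 q.num.toNat q.den q.den_pos
  have e : ((q.num.toNat : ℕ) : ℝ) / (q.den : ℝ) = (q : ℝ) := by
    have h0 : ((q.num.toNat : ℤ)) = q.num := Int.toNat_of_nonneg (Rat.num_nonneg.2 hq)
    have h2 : ((q.num.toNat : ℕ) : ℝ) = ((q.num : ℤ) : ℝ) := by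
      have h3 := congrArg (fun k : ℤ => (k : ℝ)) h0
      simpa only [Int.cast_natCast] using h3
    rw [h2, Rat.cast_def]
  rw [e] at h
  exact h

theorem aux_pos (g : ℝ → ℝ) (T : ℝ) (hg : ∀ t c, T ≤ t → 0 < c → g t < g (t + c))
    (h1 : ∀ l c, 0 < c →
      Tendsto (fun t => (g (t + l + c) - g (t + l)) / (g (t + c) - g t)) atTop (nhds 1))
    (c : ℝ) (hc : 0 < c) :
    Tendsto (fun t => (g (t + c) - g t) / (g (t + 1) - g t)) atTop (nhds c) := by
  rw [tendsto_order]
  constructor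
  · intro b hb
    obtain ⟨q, hq1, hq2⟩ := exists_rat_btwn (max_lt hb hc)
    have hq0 : (0 : ℝ) < q := lt_of_le_of_lt (le_max_right _ _) hq1
    have h := aux_ratQ g T hg h1 q (by exact_mod_cast hq0.le)
    filter_upwards [h.eventually (lt_mem_nhds (lt_of_le_of_lt (le_max_left _ _) hq1)),
      eventually_ge_atTop T] with t ht hT
    refine ht.trans_le ?_
    have hp := sub_pos.2 (hg t 1 hT one_pos)
    have hm := hg (t + q) (c - q) (by linarith) (by linarith)
    rw [show t + q + (c - q) = t + c by ring] at hm
    gcongr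
  · intro b hb
    obtain ⟨q, hq1, hq2⟩ := exists_rat_btwn hb
    have hq0 : (0 : ℝ) < q := hc.trans hq1
    have h := aux_ratQ g T hg h1 q (by exact_mod_cast hq0.le)
    filter_upwards [h.eventually (gt_mem_nhds hq2), eventually_ge_atTop T] with t ht hT
    refine lt_of_le_of_lt ?_ ht
    have hp := sub_pos.2 (hg t 1 hT one_pos)
    have hm := hg (t + c) (q - c) (by linarith) (by linarith)
    rw [show t + c + (q - c) = t + q by ring] at hm
    gcongr

theorem aux_all (g : ℝ → ℝ) (T : ℝ) (hg : ∀ t c, T ≤ t → 0 < c → g t < g (t + c))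
    (h1 : ∀ l c, 0 < c →
      Tendsto (fun t => (g (t + l + c) - g (t + l)) / (g (t + c) - g t)) atTop (nhds 1))
    (c : ℝ) :
    Tendsto (fun t => (g (t + c) - g t) / (g (t + 1) - g t)) atTop (nhds c) := by
  rcases lt_trichotomy c 0 with hc | hc | hc
  · have A := h1 c (-c) (by linarith)
    have B := aux_pos g T hg h1 (-c) (by linarith)
    have C := (A.mul B).neg
    simp only [one_mul, neg_neg] at C
    refine C.congr' ?_
    filter_upwards [eventually_ge_atTop T] with t hT
    have hp := sub_pos.2 (hg t (-c) hT (by linarith))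
    rw [div_mul_div_cancel₀ hp.ne', ← neg_div]
    congr 1
    rw [show t + c + -c = t by ring]; ring
  · subst hc; simp
  · exact aux_pos g T hg h1 c hc

theorem aux_int (r : ℝ → ℝ) (s₀ : ℝ) (hs₀ : s₀ ∈ Set.Ioo (0:ℝ) 1)
    (hrint : ∀ s : ℝ, 0 < s → s ≤ s₀ →
      IntervalIntegrable (fun u : ℝ => u⁻¹ * r u) volume s 1)
    (a b : ℝ) (ha : 0 < a) (hab : a ≤ b) (hb : b ≤ s₀) :
    IntervalIntegrable (fun u : ℝ => u⁻¹ * r u) volume a b := by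
  exact (hrint a ha (hab.trans hb)).trans (hrint b (ha.trans_le hab) hb).symm

theorem aux_ratio (r : ℝ → ℝ) (s₀ : ℝ) (hs₀ : s₀ ∈ Set.Ioo (0:ℝ) 1)
    (hrpos : ∀ s ∈ Set.Ioo (0:ℝ) 1, 0 < r s) (hrsv : SlowlyVaryingAtZero r)
    (hrint : ∀ s : ℝ, 0 < s → s ≤ s₀ →
      IntervalIntegrable (fun u : ℝ => u⁻¹ * r u) volume s 1)
    (lam : ℝ) (hl : 0 < lam) (ε : ℝ) (hε : 0 < ε) :
    ∃ η > 0, ∀ a b : ℝ, 0 < a → a < b → b ≤ η →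
      |(∫ u in (lam * a)..(lam * b), u⁻¹ * r u) / (∫ u in a..b, u⁻¹ * r u) - 1| ≤ ε := by
  have h := (Metric.tendsto_nhds.1 (hrsv lam hl)) ε hε
  rw [eventually_nhdsWithin_iff, Metric.eventually_nhds_iff] at h
  obtain ⟨δ, hδ, h⟩ := h
  have hs0 := hs₀.1
  refine ⟨min (δ / 2) (min s₀ (s₀ / lam)), by positivity, fun a b ha hab hb => ?_⟩
  have hb1 : b ≤ δ / 2 := hb.trans (min_le_left _ _)
  have hb2 : b ≤ s₀ := hb.trans ((min_le_right _ _).trans (min_le_left _ _))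
  have hb3 : lam * b ≤ s₀ := by
    have : b ≤ s₀ / lam := hb.trans ((min_le_right _ _).trans (min_le_right _ _))
    rw [le_div_iff₀ hl] at this; linarith
  have hI := aux_int r s₀ hs₀ hrint a b ha hab.le hb2
  have hJ := aux_int r s₀ hs₀ hrint (lam * a) (lam * b) (by positivity) (by gcongr) hb3
  have hpos : 0 < ∫ u in a..b, u⁻¹ * r u := by
    refine intervalIntegral.intervalIntegral_pos_of_pos_on hI (fun u hu => ?_) hab
    have h0 : 0 < u := ha.trans hu.1
    have := hrpos u ⟨h0, by linarith [hu.2, hs₀.2]⟩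
    positivity
  have hJ' : IntervalIntegrable (fun u : ℝ => u⁻¹ * r (lam * u)) volume a b := by
    have := (hJ.comp_mul_left (c := lam)).const_mul lam
    rw [mul_div_cancel_left₀ _ hl.ne', mul_div_cancel_left₀ _ hl.ne'] at this
    refine this.congr (fun u hu => ?_)
    simp only [mul_inv]
    field_simp
  have hE : (∫ u in (lam * a)..(lam * b), u⁻¹ * r u) = ∫ u in a..b, u⁻¹ * r (lam * u) := by
    rw [← intervalIntegral.mul_integral_comp_mul_left, ← intervalIntegral.integral_const_mul]
    congr 1
    ext u
    simp only [mul_inv]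
    field_simp
  have key : ∀ u ∈ Set.Icc a b, (1 - ε) * (u⁻¹ * r u) ≤ u⁻¹ * r (lam * u) ∧
      u⁻¹ * r (lam * u) ≤ (1 + ε) * (u⁻¹ * r u) := by
    intro u hu
    have h0 : 0 < u := ha.trans_le hu.1
    have hr := hrpos u ⟨h0, by linarith [hu.2, hs₀.2]⟩
    have h2 := h (y := u) (by
      rw [Real.dist_eq, sub_zero, abs_of_pos h0]; linarith [hu.2]) h0
    rw [Real.dist_eq, abs_lt, lt_sub_iff_add_lt, sub_lt_iff_lt_add, lt_div_iff₀ hr,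
      div_lt_iff₀ hr] at h2
    have hi : 0 ≤ u⁻¹ := by positivity
    constructor
    · have := mul_le_mul_of_nonneg_left h2.1.le hi
      linarith
    · have := mul_le_mul_of_nonneg_left h2.2.le hi
      linarith
  have L := intervalIntegral.integral_mono_on hab.le (hI.const_mul (1 - ε)) hJ'
    (fun u hu => (key u hu).1)
  have U := intervalIntegral.integral_mono_on hab.le hJ' (hI.const_mul (1 + ε))
    (fun u hu => (key u hu).2)
  rw [intervalIntegral.integral_const_mul] at L U
  rw [hE, abs_le, le_sub_iff_add_le, sub_le_iff_le_add, le_div_iff₀ hpos, div_le_iff₀ hpos]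
  constructor <;> linarith

/-- `F ∈ D*(Λ)` implies `F ∈ D(Λ)`: if `Q(1-s) = a + ∫_s^1 u⁻¹ r(u) du`
near `0` with `r` strictly positive, measurable and slowly varying at zero, then `Q`
satisfies de Haan's criterion. -/
theorem deHaan_of_Dstar
    (μ : Measure ℝ) [IsProbabilityMeasure μ] (F Q : ℝ → ℝ)
    (hF : F = distFun μ) (hQ : Q = quantileFun F)
    (s₀ a : ℝ) (hs₀ : s₀ ∈ Set.Ioo (0:ℝ) 1) (r : ℝ → ℝ)
    (hrmeas : Measurable r) (hrpos : ∀ s ∈ Set.Ioo (0:ℝ) 1, 0 < r s)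
    (hrsv : SlowlyVaryingAtZero r)
    (hrint : ∀ s : ℝ, 0 < s → s ≤ s₀ →
      IntervalIntegrable (fun u : ℝ => u⁻¹ * r u) volume s 1)
    (hrep : ∀ s : ℝ, 0 < s → s ≤ s₀ → Q (1 - s) = a + ∫ u in s..1, u⁻¹ * r u)
 :
    DeHaanGumbel Q := by
  set g : ℝ → ℝ := fun t => Q (1 - Real.exp (-t)) with hgdef
  set T : ℝ := -Real.log s₀ with hT
  have hs0 := hs₀.1
  have hle : ∀ t, T ≤ t → Real.exp (-t) ≤ s₀ := by
    intro t ht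
    rw [← Real.le_log_iff_exp_le hs0]; linarith
  have hdiff : ∀ t c, T ≤ t → 0 < c →
      g (t + c) - g t = ∫ u in (Real.exp (-(t + c)))..(Real.exp (-t)), u⁻¹ * r u := by
    intro t c ht hc
    have ht' : T ≤ t + c := by linarith
    simp only [hgdef]
    rw [hrep _ (Real.exp_pos _) (hle t ht), hrep _ (Real.exp_pos _) (hle _ ht')]
    have h2 := intervalIntegral.integral_add_adjacent_intervals
      (aux_int r s₀ hs₀ hrint _ _ (Real.exp_pos (-(t + c)))
        (Real.exp_le_exp.2 (by linarith)) (hle t ht))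
      (hrint _ (Real.exp_pos _) (hle _ ht))
    linarith
  have hg : ∀ t c, T ≤ t → 0 < c → g t < g (t + c) := by
    intro t c ht hc
    rw [← sub_pos, hdiff t c ht hc]
    have hlt : Real.exp (-(t + c)) < Real.exp (-t) := Real.exp_lt_exp.2 (by linarith)
    refine intervalIntegral.intervalIntegral_pos_of_pos_on
      (aux_int r s₀ hs₀ hrint _ _ (Real.exp_pos _) hlt.le (hle t ht)) (fun u hu => ?_) hlt
    have h0 : 0 < u := (Real.exp_pos _).trans hu.1
    have := hrpos u ⟨h0, by linarith [hu.2, hs₀.2, hle t ht]⟩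
    positivity
  have h1 : ∀ l c, 0 < c →
      Tendsto (fun t => (g (t + l + c) - g (t + l)) / (g (t + c) - g t)) atTop (nhds 1) := by
    intro l c hc
    rw [Metric.tendsto_nhds]
    intro ε hε
    obtain ⟨η, hη, h⟩ := aux_ratio r s₀ hs₀ hrpos hrsv hrint (Real.exp (-l)) (Real.exp_pos _)
      (ε / 2) (by positivity)
    filter_upwards [eventually_ge_atTop T, eventually_ge_atTop (T - l),
      eventually_ge_atTop (-Real.log η)] with t h2 h3 h4
    have h5 := h (Real.exp (-(t + c))) (Real.exp (-t)) (Real.exp_pos _)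
      (Real.exp_lt_exp.2 (by linarith)) (by rw [← Real.le_log_iff_exp_le hη]; linarith)
    rw [← Real.exp_add, ← Real.exp_add] at h5
    rw [Real.dist_eq, hdiff t c h2 hc, hdiff (t + l) c (by linarith) hc,
      show -(t + l + c) = -l + -(t + c) by ring, show -(t + l) = -l + -t by ring]
    linarith
  intro x y z w hx hy hz hw hyw
  have hlim := fun c => aux_all g T hg h1 c
  have hne : -Real.log y - -Real.log w ≠ 0 := by
    intro h
    exact hyw (Real.log_injOn_pos hy hw (by linarith))
  have hfin := ((hlim (-Real.log x)).sub (hlim (-Real.log z))).div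
    ((hlim (-Real.log y)).sub (hlim (-Real.log w))) hne
  have htt : Tendsto (fun s : ℝ => -Real.log s) (nhdsWithin 0 (Set.Ioi 0)) atTop :=
    tendsto_neg_atBot_atTop.comp Real.tendsto_log_nhdsGT_zero
  have hfin' := hfin.comp htt
  have e : (-Real.log x - -Real.log z) / (-Real.log y - -Real.log w) =
      (Real.log x - Real.log z) / (Real.log y - Real.log w) := by
    rw [← neg_div_neg_eq]; congr 1 <;> ring
  rw [e] at hfin'
  refine hfin'.congr' ?_
  filter_upwards [htt.eventually (eventually_ge_atTop T), self_mem_nhdsWithin] with s hs hs1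
  have hs1 : 0 < s := hs1
  have hq : ∀ x, 0 < x → Q (1 - s * x) = g (-Real.log s + -Real.log x) := by
    intro x hx
    simp only [hgdef]
    rw [show -(-Real.log s + -Real.log x) = Real.log s + Real.log x by ring, Real.exp_add,
      Real.exp_log hs1, Real.exp_log hx]
  have hD := sub_pos.2 (hg (-Real.log s) 1 hs one_pos)
  simp only [Function.comp_apply, Pi.div_apply]
  rw [hq x hx, hq y hy, hq z hz, hq w hw, ← sub_div, ← sub_div,
    div_div_div_cancel_right₀ hD.ne']
  congr 1 <;> ring
end
end
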